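/- Single-letter converse for the example with encoder shared randomness. Let 𝒰 be a finite set and let p be a joint pmf of the form p(x₁,x₂,u,y) = p(x₁) p(x₂) p(u|x₁) p(y|u,x₂), whose (X₁,X₂)-marginal is that of four i.i.d. uniform bits and whose (X₁,X₂,Y)-marginal equals the Example distribution q_{X₁X₂Y}. Then I(U;X₁) ≥ 1. -/

import Mathlib

/-!
Feed the decoder an input `x₂` whose two bits differ. The second coordinate of `Y` then reveals
which index `J` was selected, so any output that the decoder can produce from `(u, x₂)` pins down
one bit of `X₁`, at the same position for every `x₁` compatible with the message `u`. A message
therefore leaves at most two candidates for `X₁`, whence `H(X₁ | U) ≤ 1` and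
`I(U; X₁) = H(X₁) - H(X₁ | U) ≥ 2 - 1`. Only the support of the simulated law at one such `x₂`
matters, not its values.
-/

open Finset

/-- A probability mass function on a finite type. -/
def IsPMF {α : Type*} [Fintype α] (p : α → ℝ) : Prop :=
  (∀ a, 0 ≤ p a) ∧ ∑ a, p a = 1

/-- Marginal (pushforward) of a pmf `p` on `Ω` under the map `f`. -/
noncomputable def marg {Ω β : Type*} [Fintype Ω] [DecidableEq β]
    (p : Ω → ℝ) (f : Ω → β) (b : β) : ℝ :=
  ∑ ω : Ω, if f ω = b then p ω else 0

/-- Shannon entropy (in bits) of a pmf given as a function. -/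
noncomputable def entPMF {β : Type*} [Fintype β] (r : β → ℝ) : ℝ :=
  -∑ b : β, r b * Real.logb 2 (r b)

/-- Entropy (in bits) of the random variable `f` under the joint pmf `p`. -/
noncomputable def ent {Ω β : Type*} [Fintype Ω] [Fintype β] [DecidableEq β]
    (p : Ω → ℝ) (f : Ω → β) : ℝ :=
  entPMF (fun b => marg p f b)

/-- Conditional entropy `H(f | g)`. -/
noncomputable def condEnt {Ω β γ : Type*} [Fintype Ω] [Fintype β] [Fintype γ]
    [DecidableEq β] [DecidableEq γ] (p : Ω → ℝ) (f : Ω → β) (g : Ω → γ) : ℝ :=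
  ent p (fun ω => (f ω, g ω)) - ent p g

/-- Mutual information `I(f ; g)`. -/
noncomputable def mi {Ω β γ : Type*} [Fintype Ω] [Fintype β] [Fintype γ]
    [DecidableEq β] [DecidableEq γ] (p : Ω → ℝ) (f : Ω → β) (g : Ω → γ) : ℝ :=
  ent p f + ent p g - ent p (fun ω => (f ω, g ω))

/-- Conditional mutual information `I(f ; g | h)`. -/
noncomputable def cmi {Ω β γ δ : Type*} [Fintype Ω] [Fintype β] [Fintype γ] [Fintype δ]
    [DecidableEq β] [DecidableEq γ] [DecidableEq δ]
    (p : Ω → ℝ) (f : Ω → β) (g : Ω → γ) (h : Ω → δ) : ℝ :=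
  ent p (fun ω => (f ω, h ω)) + ent p (fun ω => (g ω, h ω))
    - ent p (fun ω => (f ω, g ω, h ω)) - ent p h

/-- `bsel x j` is the `j`-th bit of the two-bit string `x`. -/
def bsel (x : Bool × Bool) (j : Fin 2) : Bool := if j = 0 then x.1 else x.2

/-- The Example distribution: `X₁ = (X₁₁, X₁₂)` and `X₂ = (X₂₁, X₂₂)` are four i.i.d.
uniform bits, `J` is uniform on `{1,2}` independent of `(X₁, X₂)`, and
`Y = (X₁J, X₂J)`; `qEx` is the induced joint pmf of `(X₁, X₂, Y)`. -/
noncomputable def qEx : (Bool × Bool) × (Bool × Bool) × (Bool × Bool) → ℝ :=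
  fun a => ∑ j : Fin 2,
    (1 / 32 : ℝ) * (if a.2.2 = (bsel a.1 j, bsel a.2.1 j) then 1 else 0)

lemma mul_log_sub_log_card_le_sum_mul_log {ι : Type*} {s : Finset ι} {a : ι → ℝ}
    (ha : ∀ i ∈ s, 0 ≤ a i) :
    (∑ i ∈ s, a i) * (Real.log (∑ i ∈ s, a i) - Real.log #s) ≤
      ∑ i ∈ s, a i * Real.log (a i) := by
  rcases (sum_nonneg ha).eq_or_lt with hsum | hsum
  · have hzero := (sum_eq_zero_iff_of_nonneg ha).1 hsum.symm
    rw [← hsum, zero_mul]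
    exact sum_nonneg fun i hi => by simp [hzero i hi]
  have hs : s.Nonempty := nonempty_of_sum_ne_zero hsum.ne'
  have hcard : (0 : ℝ) < #s := by exact_mod_cast hs.card_pos
  have jensen := Real.convexOn_mul_log.map_sum_le (t := s) (w := fun _ => (#s : ℝ)⁻¹) (p := a)
    (fun _ _ => by positivity) (by simp [hcard.ne']) ha
  simp only [smul_eq_mul, ← mul_sum] at jensen
  rwa [Real.log_mul (by positivity) hsum.ne', Real.log_inv, mul_assoc,
    mul_le_mul_iff_right₀ (by positivity), neg_add_eq_sub] at jensen

lemma mul_logb_sub_logb_le_sum_mul_logb_of_card_support_le {ι : Type*} [Fintype ι]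
    {a : ι → ℝ} {b : ℝ} {k : ℕ} (hb : 1 < b) (ha : ∀ i, 0 ≤ a i) (hk : #{i | a i ≠ 0} ≤ k) :
    (∑ i, a i) * (Real.logb b (∑ i, a i) - Real.logb b k) ≤
      ∑ i, a i * Real.logb b (a i) := by
  set s : Finset ι := {i | a i ≠ 0}
  have hsum : ∑ i ∈ s, a i = ∑ i, a i := sum_filter_ne_zero univ
  have hsumlog : ∑ i ∈ s, a i * Real.log (a i) = ∑ i, a i * Real.log (a i) :=
    sum_filter_of_ne fun _ _ => left_ne_zero_of_mul
  have hlog : (∑ i, a i) * (Real.log (∑ i, a i) - Real.log k) ≤ ∑ i, a i * Real.log (a i) := by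
    rcases s.eq_empty_or_nonempty with hs | hs
    · simp [← hsum, ← hsumlog, hs]
    calc (∑ i, a i) * (Real.log (∑ i, a i) - Real.log k)
        ≤ (∑ i, a i) * (Real.log (∑ i, a i) - Real.log #s) := by
          have : 0 < (#s : ℝ) := by exact_mod_cast hs.card_pos
          gcongr
          exact sum_nonneg fun i _ => ha i
      _ ≤ ∑ i, a i * Real.log (a i) := by
          rw [← hsum, ← hsumlog]
          exact mul_log_sub_log_card_le_sum_mul_log fun i _ => ha i
  simp only [Real.logb, ← sub_div, mul_div_assoc', ← sum_div]
  exact div_le_div_of_nonneg_right hlog (Real.log_pos hb).le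

lemma sum_mul_mul_pos {ι : Type*} [Fintype ι] {c : ℝ} {f g : ι → ℝ} (hc : 0 < c)
    (hf : ∀ i, 0 ≤ f i) (hg : ∀ i, 0 ≤ g i) {i : ι} (hfi : f i ≠ 0) (hgi : g i ≠ 0) :
    0 < ∑ i, c * f i * g i :=
  sum_pos' (fun j _ => mul_nonneg (mul_nonneg hc.le (hf j)) (hg j))
    ⟨i, mem_univ i, mul_pos (mul_pos hc ((hf i).lt_of_ne' hfi)) ((hg i).lt_of_ne' hgi)⟩

section Entropy

variable {Ω β γ : Type*} [Fintype Ω] [Fintype β] [DecidableEq β] [DecidableEq γ]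

lemma sum_marg (p : Ω → ℝ) (f : Ω → β) : ∑ b, marg p f b = ∑ ω, p ω := by
  simp only [marg]
  rw [sum_comm]
  simp

lemma IsPMF.marg {p : Ω → ℝ} (hp : IsPMF p) (f : Ω → β) : IsPMF (marg p f) :=
  ⟨fun _ => sum_nonneg fun ω _ => ite_nonneg (hp.1 ω) le_rfl, (sum_marg p f).trans hp.2⟩

lemma sum_marg_prodMk (p : Ω → ℝ) (f : Ω → β) (g : Ω → γ) (c : γ) :
    ∑ b, marg p (fun ω => (f ω, g ω)) (b, c) = marg p g c := by
  simp only [marg]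
  rw [sum_comm]
  simp [ite_and]

lemma ent_eq_logb_card {p : Ω → ℝ} {f : Ω → β}
    (h : ∀ b, marg p f b = (Fintype.card β : ℝ)⁻¹) :
    ent p f = Real.logb 2 (Fintype.card β) := by
  rcases isEmpty_or_nonempty β with hβ | hβ
  · simp [ent, entPMF]
  · simp [ent, entPMF, h]

variable [Fintype γ]

lemma ent_prodMk_comm (p : Ω → ℝ) (f : Ω → β) (g : Ω → γ) :
    ent p (fun ω => (f ω, g ω)) = ent p (fun ω => (g ω, f ω)) := by
  have hmarg : ∀ a : β × γ,
      marg p (fun ω => (f ω, g ω)) a = marg p (fun ω => (g ω, f ω)) a.swap := fun a => by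
    simp [marg, Prod.ext_iff, and_comm]
  simp only [ent, entPMF, hmarg]
  rw [← (Equiv.prodComm β γ).sum_comp]
  rfl

lemma mi_eq_ent_sub_condEnt (p : Ω → ℝ) (f : Ω → β) (g : Ω → γ) :
    mi p f g = ent p g - condEnt p g f := by
  rw [mi, condEnt, ent_prodMk_comm p g f]
  ring

lemma condEnt_le_logb_of_card_support_le {p : Ω → ℝ} (hp : IsPMF p) {f : Ω → β} {g : Ω → γ} {k : ℕ}
    (hk : ∀ c, #{b | marg p (fun ω => (f ω, g ω)) (b, c) ≠ 0} ≤ k) :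
    condEnt p f g ≤ Real.logb 2 k := by
  have hfiber : ∀ c, marg p g c * (Real.logb 2 (marg p g c) - Real.logb 2 k) ≤
      ∑ b, marg p (fun ω => (f ω, g ω)) (b, c) *
        Real.logb 2 (marg p (fun ω => (f ω, g ω)) (b, c)) := fun c => by
    rw [← sum_marg_prodMk p f g c]
    exact mul_logb_sub_logb_le_sum_mul_logb_of_card_support_le one_lt_two
      (fun _ => (hp.marg _).1 _) (hk c)
  have hsum := sum_le_sum fun c (_ : c ∈ univ) => hfiber c
  simp only [mul_sub, sum_sub_distrib, ← sum_mul, (hp.marg g).2, one_mul] at hsum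
  simp only [condEnt, ent, entPMF, Fintype.sum_prod_type_right]
  linarith

end Entropy

section JointLaw

variable {A B C D : Type*}

/-- The joint law `r(x₁,x₂) p(u|x₁) p(y|u,x₂)` of `(X₁, X₂, U, Y)` when an encoder turns `X₁` into
a message `U` and a decoder turns `U` and `X₂` into an output `Y`. -/
def jointLaw (r : A × B → ℝ) (pU : A → C → ℝ) (pY : C → B → D → ℝ) : A × B × C × D → ℝ :=
  fun ω => r (ω.1, ω.2.1) * pU ω.1 ω.2.2.1 * pY ω.2.2.1 ω.2.1 ω.2.2.2

variable [Fintype A] [Fintype B] [Fintype C] [Fintype D]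
  {r : A × B → ℝ} {pU : A → C → ℝ} {pY : C → B → D → ℝ}

lemma isPMF_jointLaw (hr : IsPMF r) (hpU : ∀ x₁, IsPMF (pU x₁)) (hpY : ∀ u x₂, IsPMF (pY u x₂)) :
    IsPMF (jointLaw r pU pY) := by
  refine ⟨fun ω => mul_nonneg (mul_nonneg (hr.1 _) ((hpU _).1 _)) ((hpY _ _).1 _), ?_⟩
  simp [jointLaw, Fintype.sum_prod_type, ← mul_sum, (hpY _ _).2, (hpU _).2,
    ← Fintype.sum_prod_type', hr.2]

variable [DecidableEq A]

lemma marg_fst (q : A × B → ℝ) (a : A) : marg q (fun ω => ω.1) a = ∑ b, q (a, b) := by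
  rw [marg, Fintype.sum_prod_type, sum_comm]
  simp

lemma marg_jointLaw_source (hpU : ∀ x₁, IsPMF (pU x₁)) (hpY : ∀ u x₂, IsPMF (pY u x₂)) (x₁ : A) :
    marg (jointLaw r pU pY) (fun ω => ω.1) x₁ = marg r (fun ω => ω.1) x₁ := by
  simp [marg_fst, jointLaw, Fintype.sum_prod_type, ← mul_sum, (hpY _ _).2, (hpU _).2]

variable [DecidableEq C]

lemma marg_jointLaw_source_message (hpY : ∀ u x₂, IsPMF (pY u x₂)) (x₁ : A) (u : C) :
    marg (jointLaw r pU pY) (fun ω => (ω.1, ω.2.2.1)) (x₁, u) =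
      marg r (fun ω => ω.1) x₁ * pU x₁ u := by
  rw [marg_fst, sum_mul]
  simp [marg, jointLaw, Fintype.sum_prod_type, ite_and, ← mul_sum, (hpY _ _).2]

theorem ent_sub_logb_le_mi_jointLaw (hr : IsPMF r) (hpU : ∀ x₁, IsPMF (pU x₁))
    (hpY : ∀ u x₂, IsPMF (pY u x₂)) {S : A → D → Prop} [DecidableRel S] {k : ℕ} {x₂ : B}
    (hS : ∀ x₁ u y, pU x₁ u ≠ 0 → pY u x₂ y ≠ 0 → S x₁ y) (hk : ∀ y, #{x₁ | S x₁ y} ≤ k) :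
    ent r (fun ω => ω.1) - Real.logb 2 k ≤
      mi (jointLaw r pU pY) (fun ω => ω.2.2.1) (fun ω => ω.1) := by
  have hsource : ent (jointLaw r pU pY) (fun ω => ω.1) = ent r (fun ω => ω.1) := by
    simp only [ent, marg_jointLaw_source hpU hpY]
  rw [mi_eq_ent_sub_condEnt, hsource]
  refine sub_le_sub_left
    (condEnt_le_logb_of_card_support_le (isPMF_jointLaw hr hpU hpY) fun u => ?_) _
  obtain ⟨y, -, hy⟩ : ∃ y ∈ univ, pY u x₂ y ≠ 0 :=
    exists_ne_zero_of_sum_ne_zero ((hpY u x₂).2.trans_ne one_ne_zero)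
  refine (card_le_card (monotone_filter_right univ fun x₁ _ hx₁ => ?_)).trans (hk y)
  rw [marg_jointLaw_source_message hpY] at hx₁
  exact hS x₁ u y (right_ne_zero_of_mul hx₁) hy

end JointLaw

section Example

lemma qEx_ne_zero_iff (x₁ x₂ y : Bool × Bool) :
    qEx (x₁, x₂, y) ≠ 0 ↔ ∃ j, y = (bsel x₁ j, bsel x₂ j) := by
  rw [qEx, Ne, sum_eq_zero_iff_of_nonneg fun _ _ => by positivity]
  simp [or_iff_not_imp_left]

lemma bsel_bijective {x : Bool × Bool} (hx : x.1 ≠ x.2) : Function.Bijective (bsel x) := by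
  revert x
  decide

lemma card_bsel_eq (j : Fin 2) (b : Bool) : #{x | bsel x j = b} = 2 := by
  revert j b
  decide

lemma card_qEx_ne_zero_le_two {x₂ : Bool × Bool} (hx₂ : x₂.1 ≠ x₂.2) (y : Bool × Bool) :
    #{x₁ | qEx (x₁, x₂, y) ≠ 0} ≤ 2 := by
  obtain ⟨j, hj⟩ := (bsel_bijective hx₂).surjective y.2
  refine (card_le_card (monotone_filter_right univ fun x₁ _ hx₁ => ?_)).trans
    (card_bsel_eq j y.1).le
  obtain ⟨i, rfl⟩ := (qEx_ne_zero_iff _ _ _).1 hx₁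
  rw [(bsel_bijective hx₂).injective hj]

end Example

theorem example_single_letter_converse_encSR_general
    {U : Type*} [Fintype U] [DecidableEq U]
    (pUc : Bool × Bool → U → ℝ) (pYc : U → Bool × Bool → Bool × Bool → ℝ)
    (hpU : ∀ x1, IsPMF (pUc x1)) (hpY : ∀ u x2, IsPMF (pYc u x2))
    (p : (Bool × Bool) × (Bool × Bool) × U × (Bool × Bool) → ℝ)
    (hpdef : ∀ x1 x2 u y,
      p (x1, x2, u, y) = (1 / 16 : ℝ) * pUc x1 u * pYc u x2 y)
    {x2 : Bool × Bool} (hx2 : x2.1 ≠ x2.2)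
    (hsupp : ∀ x1 u y, pUc x1 u ≠ 0 → pYc u x2 y ≠ 0 → qEx (x1, x2, y) ≠ 0) :
    1 ≤ mi p (fun ω => ω.2.2.1) (fun ω => ω.1) := by
  let r : (Bool × Bool) × (Bool × Bool) → ℝ := fun _ => 1 / 16
  have hr : IsPMF r := ⟨fun _ => by positivity, by norm_num [r]⟩
  have hp : p = jointLaw r pUc pYc := funext fun ω => hpdef _ _ _ _
  have hent : ent r (fun ω => ω.1) = Real.logb 2 4 := by
    refine (ent_eq_logb_card fun b => ?_).trans (by norm_num)
    norm_num [marg, r, Fintype.sum_prod_type]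
  have hlog : Real.logb 2 4 = 2 := by
    rw [show (4 : ℝ) = 2 ^ 2 by norm_num, Real.logb_pow, Real.logb_self_eq_one one_lt_two]
    norm_num
  have hmi := ent_sub_logb_le_mi_jointLaw hr hpU hpY hsupp (card_qEx_ne_zero_le_two hx2)
  rw [← hp, hent, hlog, Nat.cast_ofNat, Real.logb_self_eq_one one_lt_two] at hmi
  linarith

/-- **Single-letter converse for the example with encoder shared randomness.**  For any
joint pmf `p(x₁,x₂,u,y) = p(x₁) p(x₂) p(u|x₁) p(y|u,x₂)` with `(X₁,X₂)`-marginal four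
i.i.d. uniform bits and `(X₁,X₂,Y)`-marginal equal to the Example distribution `qEx`, we
have `I(U;X₁) ≥ 1`. -/
theorem example_single_letter_converse_encSR
    {U : Type} [Fintype U] [DecidableEq U]
    (pUc : Bool × Bool → U → ℝ) (pYc : U → Bool × Bool → Bool × Bool → ℝ)
    (hpU : ∀ x1, IsPMF (pUc x1)) (hpY : ∀ u x2, IsPMF (pYc u x2))
    (p : (Bool × Bool) × (Bool × Bool) × U × (Bool × Bool) → ℝ)
    (hpdef : ∀ x1 x2 u y,
      p (x1, x2, u, y) = (1 / 16 : ℝ) * pUc x1 u * pYc u x2 y)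
    (hmarg : ∀ x1 x2 y,
      (∑ u : U, (1 / 16 : ℝ) * pUc x1 u * pYc u x2 y) = qEx (x1, x2, y)) :
    1 ≤ mi p (fun ω => ω.2.2.1) (fun ω => ω.1) := by
  exact example_single_letter_converse_encSR_general pUc pYc hpU hpY p hpdef (x2 := (false, true))
    (by decide) fun x1 u y hu hy => hmarg x1 _ y ▸
      (sum_mul_mul_pos (by norm_num) (hpU x1).1 (fun v => (hpY v _).1 y) hu hy).ne'
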